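/- arXiv:1709.01225 — 6 statements merged into one kernel-verified Lean document; each statement's English description precedes it below -/
import Mathlib

section
/- For every tree T of order n ≥ 2, vcfc(T) ≤ ⌈log₂(n+1)⌉. -/
open SimpleGraph

/-- A vertex coloring with `k` colors makes `G` conflict-free vertex-connected if any two
distinct vertices are joined by a path on which some color is used on exactly one vertex. -/
def IsVCFCColoring {V : Type*} (G : SimpleGraph V) (k : ℕ) (c : V → Fin k) : Prop :=
  ∀ u v : V, u ≠ v → ∃ p : G.Walk u v, p.IsPath ∧
    ∃ i : Fin k, (p.support.filter (fun x => c x = i)).length = 1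

/-- The conflict-free vertex-connection number: the least number of colors in a
conflict-free vertex-connected coloring. -/
noncomputable def vcfc {V : Type*} (G : SimpleGraph V) : ℕ :=
  sInf {k | ∃ c : V → Fin k, IsVCFCColoring G k c}

/-!
Deleting a vertex `v` from a forest splits its component into the branches hanging off the edges
at `v`. In a finite component some vertex, a *centroid*, has all its branches of at most half the
size of the component. Give the top color to one centroid of every component and recurse on the
forest that remains: if every component has fewer than `2 ^ k` vertices, then `k` colors suffice.
Any walk between two vertices of equal color meets a larger color, so on a path the largest color
occurs exactly once. A connected graph inherits such a coloring from a spanning tree.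
-/

section Ranking

variable {V : Type*} {G : SimpleGraph V} {u v w : V}

/-- The branch of `G` at `v` through `w`: the vertices that `w` still reaches once the edge `vw` is
deleted. In a forest, the branches at `v` through its neighbors are the components left after
deleting `v` from its component. -/
def branch (G : SimpleGraph V) (v w : V) : Set V :=
  {y | (G.deleteEdges {s(v, w)}).Reachable w y}

theorem mem_branch_iff_exists_walk {y : V} :
    y ∈ branch G v w ↔ ∃ p : G.Walk w y, s(v, w) ∉ p.edges :=
  reachable_deleteEdges_iff_exists_walk

theorem mem_branch_self : w ∈ branch G v w :=
  Reachable.refl w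

theorem mem_branch_of_walk {x y : V} (hx : x ∈ branch G v w) (p : G.Walk x y)
    (hp : v ∉ p.support) : y ∈ branch G v w :=
  hx.trans ⟨p.toDeleteEdge _ fun h ↦ hp (p.fst_mem_support_of_mem_edges h)⟩

theorem branch_subset_supp {C : G.ConnectedComponent} (hw : w ∈ C) : branch G v w ⊆ C.supp := by
  intro y hy
  exact (ConnectedComponent.sound (hy.mono (G.deleteEdges_le _)).symm).trans hw

theorem exists_adj_mem_branch {x : V} (hvx : G.Reachable v x) (hne : v ≠ x) :
    ∃ w, G.Adj v w ∧ x ∈ branch G v w := by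
  obtain ⟨p, hp⟩ := hvx.exists_isPath
  cases p with
  | nil => exact absurd rfl hne
  | cons hvw q =>
    exact ⟨_, hvw, mem_branch_of_walk mem_branch_self q ((Walk.cons_isPath_iff _ _).1 hp).2⟩

theorem exists_adj_supp_induce_subset_branch {s : Set V} (hvs : v ∉ s) (x : s)
    (hvx : G.Reachable v x) :
    ∃ w, G.Adj v w ∧ (↑) '' ((G.induce s).connectedComponentMk x).supp ⊆ branch G v w := by
  obtain ⟨w, hvw, hxw⟩ := exists_adj_mem_branch hvx (ne_of_mem_of_not_mem x.2 hvs).symm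
  refine ⟨w, hvw, ?_⟩
  rintro _ ⟨y, hy, rfl⟩
  obtain ⟨p⟩ := (ConnectedComponent.exact hy).symm
  refine mem_branch_of_walk hxw (p.map (Embedding.induce s).toHom) fun hv ↦ ?_
  obtain ⟨z, -, rfl⟩ := List.mem_map.1 (p.support_map _ ▸ hv)
  exact hvs z.2

theorem disjoint_branch_swap (hb : G.IsBridge s(v, w)) :
    Disjoint (branch G v w) (branch G w v) := by
  refine Set.disjoint_left.2 fun y hw hv ↦ isBridge_iff.1 hb ?_
  rw [branch, Sym2.eq_swap] at hv
  exact hv.trans hw.symm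

theorem branch_ssubset_branch (hb : G.IsBridge s(w, u)) (hwu : G.Adj w u) (huv : u ≠ v) :
    branch G w u ⊂ branch G v w := by
  classical
  have hw : w ∉ branch G w u := fun h ↦ isBridge_iff.1 hb h.symm
  refine (Set.ssubset_iff_of_subset fun y hy ↦ ?_).2 ⟨w, mem_branch_self, hw⟩
  obtain ⟨p, hp⟩ := mem_branch_iff_exists_walk.1 hy
  have hwp : w ∉ p.support := fun h ↦ hw <| mem_branch_iff_exists_walk.2
    ⟨p.takeUntil w h, fun he ↦ hp (p.edges_takeUntil_subset_edges h he)⟩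
  refine mem_branch_iff_exists_walk.2 ⟨.cons hwu p, ?_⟩
  rw [Walk.edges_cons, List.mem_cons, not_or, Sym2.eq_swap (a := v), Sym2.congr_right]
  exact ⟨huv.symm, fun he ↦ hwp (p.fst_mem_support_of_mem_edges he)⟩

theorem exists_centroid (hG : G.IsAcyclic) {C : G.ConnectedComponent} (hC : C.supp.Finite) :
    ∃ v ∈ C, ∀ w, G.Adj v w → 2 * (branch G v w).ncard ≤ C.supp.ncard := by
  -- If every `v` had a heavy branch, through `f v` say, the smallest of these heavy branches would
  -- either be disjoint from another one or properly contain one.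
  have hbridge {v w : V} (h : G.Adj v w) : G.IsBridge s(v, w) :=
    isAcyclic_iff_forall_adj_isBridge.1 hG h
  by_contra! hheavy
  choose! f hadj hcard using hheavy
  have hmem {v : V} (hv : v ∈ C) : f v ∈ C := (C.mem_supp_congr_adj (hadj v hv)).1 hv
  obtain ⟨v, hv, hmin⟩ :=
    C.supp.exists_min_image (fun v ↦ (branch G v (f v)).ncard) hC C.nonempty_supp
  have hw := hmem hv
  by_cases hback : f (f v) = v
  · have hsub : branch G v (f v) ∪ branch G (f v) v ⊆ C.supp :=
      Set.union_subset (branch_subset_supp hw) (branch_subset_supp hv)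
    have hle := Set.ncard_le_ncard hsub hC
    rw [Set.ncard_union_eq (disjoint_branch_swap (hbridge (hadj v hv)))
      (hC.subset (branch_subset_supp hw)) (hC.subset (branch_subset_supp hv))] at hle
    have hv_heavy := hcard v hv
    have hw_heavy := hcard _ hw
    rw [hback] at hw_heavy
    lia
  · have hlt : (branch G (f v) (f (f v))).ncard < (branch G v (f v)).ncard :=
      Set.ncard_lt_ncard (branch_ssubset_branch (hbridge (hadj _ hw)) (hadj _ hw) hback)
        (hC.subset (branch_subset_supp hw))
    exact (hmin _ hw).not_gt hlt

theorem exists_transversal_halving (hG : G.IsAcyclic)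
    (hfin : ∀ C : G.ConnectedComponent, C.supp.Finite) :
    ∃ s : Set V, (∀ x ∉ s, ∀ y ∉ s, G.Reachable x y → x = y) ∧
      ∀ C : (G.induce s).ConnectedComponent, C.supp.Finite ∧
        ∃ D : G.ConnectedComponent, 2 * C.supp.ncard ≤ D.supp.ncard := by
  choose m hm hhalf using fun C ↦ exists_centroid hG (hfin C)
  refine ⟨(Set.range m)ᶜ, fun x hx y hy hxy ↦ ?_, fun C ↦ ?_⟩
  · obtain ⟨C, rfl⟩ := Set.notMem_compl_iff.1 hx
    obtain ⟨D, rfl⟩ := Set.notMem_compl_iff.1 hy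
    exact congrArg m ((hm C).symm.trans ((ConnectedComponent.sound hxy).trans (hm D)))
  · induction C using ConnectedComponent.ind with | h x
    let D := G.connectedComponentMk x.1
    have hmD : m D ∉ (Set.range m)ᶜ := Set.notMem_compl_iff.2 ⟨D, rfl⟩
    obtain ⟨w, hadj, hsub⟩ :=
      exists_adj_supp_induce_subset_branch hmD x (ConnectedComponent.exact (hm D))
    have hwD : w ∈ D := (D.mem_supp_congr_adj hadj).1 (hm D)
    have hbranch : (branch G (m D) w).Finite := (hfin D).subset (branch_subset_supp hwD)
    refine ⟨(hbranch.subset hsub).of_finite_image Subtype.val_injective.injOn, D, ?_⟩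
    have hle := Set.ncard_le_ncard hsub hbranch
    rw [Set.ncard_image_of_injective _ Subtype.val_injective] at hle
    exact (Nat.mul_le_mul_left 2 hle).trans (hhalf D w hadj)

/-- A vertex ranking: every walk between two distinct vertices of the same color meets a vertex of
larger color. -/
def IsVertexRanking {α : Type*} [LT α] (G : SimpleGraph V) (c : V → α) : Prop :=
  ∀ ⦃x y : V⦄, x ≠ y → c x = c y → ∀ p : G.Walk x y, ∃ z ∈ p.support, c x < c z

theorem exists_walk_support_subset {x y : V} (p : G.Walk u v) (hx : x ∈ p.support)
    (hy : y ∈ p.support) : ∃ q : G.Walk x y, q.support ⊆ p.support := by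
  classical
  refine ⟨(p.takeUntil x hx).reverse.append (p.takeUntil y hy), fun z hz ↦ ?_⟩
  rw [Walk.mem_support_append_iff, Walk.support_reverse, List.mem_reverse] at hz
  exact hz.elim (p.support_takeUntil_subset_support hx ·)
    (p.support_takeUntil_subset_support hy ·)

namespace IsVertexRanking

theorem exists_unique_color {α : Type*} [LinearOrder α] {c : V → α} (hc : IsVertexRanking G c)
    (p : G.Walk u v) : ∃ x ∈ p.support, ∀ y ∈ p.support, c y = c x → y = x := by
  classical
  obtain ⟨x, hx, hmax⟩ :=
    p.support.toFinset.exists_max_image c ⟨u, List.mem_toFinset.2 p.start_mem_support⟩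
  simp only [List.mem_toFinset] at hx hmax
  refine ⟨x, hx, fun y hy hyx ↦ ?_⟩
  by_contra hne
  obtain ⟨q, hq⟩ := exists_walk_support_subset p hy hx
  obtain ⟨z, hz, hlt⟩ := hc hne hyx q
  exact (hmax z (hq hz)).not_gt (hyx ▸ hlt)

theorem isVCFCColoring {k : ℕ} {c : V → Fin k} (hc : IsVertexRanking G c) (hG : G.Preconnected) :
    IsVCFCColoring G k c := by
  classical
  intro u v _
  obtain ⟨p, hp⟩ := hG.exists_isPath u v
  obtain ⟨x, hx, hunique⟩ := hc.exists_unique_color p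
  refine ⟨p, hp, c x, ?_⟩
  calc (p.support.filter (c · = c x)).length
      = (p.support.filter (· == x)).length := by
        congr 1
        refine List.filter_congr fun y hy ↦ ?_
        rw [Bool.eq_iff_iff, decide_eq_true_iff, beq_iff_eq]
        exact ⟨hunique y hy, congrArg c⟩
    _ = p.support.count x := List.count_eq_length_filter.symm
    _ = 1 := List.count_eq_one_of_mem hp.support_nodup hx

theorem exists_of_induce {k : ℕ} {s : Set V} {c : s → Fin k} (hc : IsVertexRanking (G.induce s) c)
    (hs : ∀ x ∉ s, ∀ y ∉ s, G.Reachable x y → x = y) :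
    ∃ c' : V → Fin (k + 1), IsVertexRanking G c' := by
  classical
  refine ⟨fun x ↦ if h : x ∈ s then (c ⟨x, h⟩).castSucc else Fin.last k, ?_⟩
  intro x y hne hxy p
  by_cases hx : x ∈ s <;> by_cases hy : y ∈ s <;>
    simp only [hx, hy, dif_pos, dif_neg, not_false_iff] at hxy ⊢
  · rw [Fin.castSucc_inj] at hxy
    by_cases hp : ∀ z ∈ p.support, z ∈ s
    · obtain ⟨z, hz, hlt⟩ := hc (by simpa using hne) hxy (p.induce s hp)
      rw [Walk.support_induce] at hz
      exact ⟨z, by simpa using hz, by simpa using hlt⟩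
    · push Not at hp
      obtain ⟨z, hz, hzs⟩ := hp
      exact ⟨z, hz, by simpa only [hzs, dif_neg, not_false_iff] using Fin.castSucc_lt_last _⟩
  · exact absurd hxy (Fin.castSucc_lt_last _).ne
  · exact absurd hxy (Fin.castSucc_lt_last _).ne'
  · exact absurd (hs x hx y hy p.reachable) hne

end IsVertexRanking

theorem exists_isVertexRanking (hG : G.IsAcyclic) {k : ℕ}
    (hfin : ∀ C : G.ConnectedComponent, C.supp.Finite)
    (hcard : ∀ C : G.ConnectedComponent, C.supp.ncard < 2 ^ k) :
    ∃ c : V → Fin k, IsVertexRanking G c := by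
  induction k generalizing V with
  | zero =>
    have : IsEmpty V := by
      refine ⟨fun x ↦ ?_⟩
      have hlt := hcard (G.connectedComponentMk x)
      have hpos := (Set.ncard_pos (hfin _)).2 (G.connectedComponentMk x).nonempty_supp
      lia
    exact ⟨isEmptyElim, isEmptyElim⟩
  | succ k ih =>
    obtain ⟨s, hs, hhalf⟩ := exists_transversal_halving hG hfin
    have hsmall (C : (G.induce s).ConnectedComponent) : C.supp.ncard < 2 ^ k := by
      obtain ⟨D, hCD⟩ := (hhalf C).2
      have hD := hcard D
      rw [pow_succ] at hD
      lia
    obtain ⟨c, hc⟩ := ih (hG.induce s) (fun C ↦ (hhalf C).1) hsmall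
    exact hc.exists_of_induce hs

theorem IsVCFCColoring.mono {H : SimpleGraph V} {k : ℕ} {c : V → Fin k}
    (hc : IsVCFCColoring H k c) (hHG : H ≤ G) : IsVCFCColoring G k c := by
  intro u v huv
  obtain ⟨p, hp, i, hi⟩ := hc u v huv
  exact ⟨p.mapLe hHG, hp.mapLe hHG, i, by rwa [Walk.support_mapLe_eq_support]⟩

theorem IsVCFCColoring.vcfc_le {k : ℕ} {c : V → Fin k} (hc : IsVCFCColoring G k c) :
    vcfc G ≤ k :=
  Nat.sInf_le ⟨c, hc⟩

theorem vcfc_tree_le_clog_general [Finite V] (hG : G.Connected) :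
    vcfc G ≤ Nat.clog 2 (Nat.card V + 1) := by
  obtain ⟨T, hTG, hT⟩ := hG.exists_isTree_le
  have hcard (C : T.ConnectedComponent) :
      C.supp.ncard < 2 ^ Nat.clog 2 (Nat.card V + 1) :=
    (Nat.lt_succ_of_le (Set.ncard_le_card C.supp)).trans_le (Nat.le_pow_clog one_lt_two _)
  obtain ⟨c, hc⟩ := exists_isVertexRanking hT.isAcyclic (fun C ↦ C.supp.toFinite) hcard
  exact ((hc.isVCFCColoring hT.connected.preconnected).mono hTG).vcfc_le

end Ranking

/-- For every tree `T` of order `n ≥ 2`, `vcfc(T) ≤ ⌈log₂(n+1)⌉`. -/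
theorem vcfc_tree_le_clog {V : Type*} [Fintype V] (T : SimpleGraph V) (hT : T.IsTree)
    (n : ℕ) (hn : Fintype.card V = n) (h2 : 2 ≤ n) :
    vcfc T ≤ Nat.clog 2 (n + 1) := by
  rw [← hn, ← Nat.card_eq_fintype_card]
  exact vcfc_tree_le_clog_general hT.connected
end

section
/- For every integer n ≥ 2, the path P_n on n vertices satisfies vcfc(P_n) = ⌈log₂(n+1)⌉. -/
open SimpleGraph

/-!
A path of a path graph visits exactly the vertices between its ends, so the colorings in question
are those for which every interval contains a point whose color is unique in it. Removing such a
point from an interval leaves two intervals that use one color less, so by induction `k` colors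
suffice for at most `2 ^ k - 1` points. Conversely, the ruler coloring `x ↦ v₂(x + 1)` attains this
bound: between two integers of equal 2-adic valuation lies one of larger valuation, so the maximum
of `v₂` on an interval is attained only once.
-/

variable {ι α : Type*}

/-- The conflict-free condition on a set of vertices: the coloring `c` takes some color on exactly
one point of `s`. The color is represented by that point. -/
def HasUniqueColor (c : ι → α) (s : Set ι) : Prop :=
  ∃ x ∈ s, ∀ y ∈ s, c y = c x → y = x

/-- A coloring of an ordered set is conflict-free on intervals if every nonempty closed interval has
a uniquely colored point. For a linear order this is the order-theoretic form of `IsVCFCColoring`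
on the Hasse diagram. -/
def IsIntervalConflictFree [Preorder ι] (c : ι → α) : Prop :=
  ∀ ⦃u v⦄, u ≤ v → HasUniqueColor c (Set.Icc u v)

theorem exists_length_filter_eq_one_iff_hasUniqueColor [DecidableEq α] {c : ι → α} {l : List ι}
    (hl : l.Nodup) :
    (∃ i, (l.filter (fun x => c x = i)).length = 1) ↔ HasUniqueColor c {x | x ∈ l} := by
  classical
  simp only [← List.toFinset_card_of_nodup (hl.filter _), Finset.card_eq_one,
    Finset.eq_singleton_iff_unique_mem, List.mem_toFinset, List.mem_filter, decide_eq_true_eq]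
  constructor
  · rintro ⟨_, x, ⟨hx, rfl⟩, huniq⟩
    exact ⟨x, hx, fun y hy hyx => huniq y ⟨hy, hyx⟩⟩
  · rintro ⟨x, hx, huniq⟩
    exact ⟨c x, x, ⟨hx, rfl⟩, fun y hy => huniq y hy.1 hy.2⟩

theorem image_subset_erase_image [DecidableEq ι] [DecidableEq α] {c : ι → α} {s t : Finset ι}
    {x : ι} (huniq : ∀ y ∈ s, c y = c x → y = x) (ht : t ⊆ s.erase x) :
    t.image c ⊆ (s.image c).erase (c x) := by
  intro i hi
  obtain ⟨y, hy, rfl⟩ := Finset.mem_image.1 hi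
  obtain ⟨hyx, hys⟩ := Finset.mem_erase.1 (ht hy)
  exact Finset.mem_erase.2 ⟨fun h => hyx (huniq y hys h), Finset.mem_image_of_mem c hys⟩

section LinearOrder

variable [LinearOrder ι]

theorem setOf_mem_support_hasse_of_le {u v : ι} {p : (hasse ι).Walk u v} (hp : p.IsPath)
    (huv : u ≤ v) : {x | x ∈ p.support} = Set.Icc u v := by
  induction p with
  | nil => simp
  | @cons u w v huw p ih =>
    rw [Walk.cons_isPath_iff] at hp
    obtain ⟨hp, hu⟩ := hp
    have hne : u ≠ v := fun h => hu (h ▸ p.end_mem_support)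
    have hlt : u < v := huv.lt_of_ne hne
    rcases hasse_adj.1 huw with hcov | hcov
    · have hsupport : {x | x ∈ p.support} = Set.Ioc u v := by
        rw [ih hp (hcov.ge_of_gt hlt), ← Set.Ici_inter_Iic, ← hcov.Ioi_eq, Set.Ioi_inter_Iic]
      rw [← Set.Ioc_insert_left huv, ← hsupport]
      ext x
      simp
    · have hmem : u ∈ {x | x ∈ p.support} := by
        rw [ih hp (hcov.le.trans huv)]
        exact ⟨hcov.le, huv⟩
      exact absurd hmem hu

theorem setOf_mem_support_hasse {u v : ι} {p : (hasse ι).Walk u v} (hp : p.IsPath) :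
    {x | x ∈ p.support} = Set.uIcc u v := by
  rcases le_total u v with huv | hvu
  · rw [setOf_mem_support_hasse_of_le hp huv, Set.uIcc_of_le huv]
  · rw [Set.uIcc_of_ge hvu, ← setOf_mem_support_hasse_of_le hp.reverse hvu]
    simp only [Walk.support_reverse, List.mem_reverse]

theorem isVCFCColoring_hasse_iff (hconn : (hasse ι).Preconnected) {k : ℕ} {c : ι → Fin k} :
    IsVCFCColoring (hasse ι) k c ↔ IsIntervalConflictFree c := by
  have conflictFree_iff {u v : ι} {p : (hasse ι).Walk u v} (hp : p.IsPath) :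
      (∃ i, (p.support.filter (fun x => c x = i)).length = 1) ↔
        HasUniqueColor c (Set.uIcc u v) := by
    rw [exists_length_filter_eq_one_iff_hasUniqueColor hp.support_nodup, setOf_mem_support_hasse hp]
  constructor
  · intro hc u v huv
    rcases huv.eq_or_lt with rfl | hlt
    · exact ⟨u, by simp, by simp⟩
    · obtain ⟨p, hp, hunique⟩ := hc u v hlt.ne
      rwa [conflictFree_iff hp, Set.uIcc_of_le huv] at hunique
  · intro hc u v _
    obtain ⟨p, hp⟩ := hconn.exists_isPath u v
    exact ⟨p, hp, (conflictFree_iff hp).2 (hc inf_le_sup)⟩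

theorem IsIntervalConflictFree.hasUniqueColor_of_ordConnected {c : ι → α}
    (hc : IsIntervalConflictFree c) {s : Finset ι} (hs : (s : Set ι).OrdConnected)
    (hne : s.Nonempty) : HasUniqueColor c s := by
  have hIcc : (s : Set ι) = Set.Icc (s.min' hne) (s.max' hne) :=
    Set.Subset.antisymm (fun x hx => ⟨s.min'_le x hx, s.le_max' x hx⟩)
      (hs.out (s.min'_mem hne) (s.max'_mem hne))
  rw [hIcc]
  exact hc (s.min'_le_max' hne)

theorem IsIntervalConflictFree.card_lt_two_pow_card_image [DecidableEq α] {c : ι → α}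
    (hc : IsIntervalConflictFree c) (s : Finset ι) (hs : (s : Set ι).OrdConnected) :
    s.card < 2 ^ (s.image c).card := by
  induction s using Finset.strongInduction with
  | H s ih =>
    rcases s.eq_empty_or_nonempty with rfl | hne
    · simp
    obtain ⟨x, hx, huniq⟩ := hc.hasUniqueColor_of_ordConnected hs hne
    rw [Finset.mem_coe] at hx
    have card_lt_of_subset_erase (t : Finset ι) (ht : t ⊆ s.erase x)
        (htconn : (t : Set ι).OrdConnected) : t.card < 2 ^ ((s.image c).card - 1) := by
      calc t.card < 2 ^ (t.image c).card :=
            ih t (ht.trans_ssubset (Finset.erase_ssubset hx)) htconn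
        _ ≤ 2 ^ ((s.image c).erase (c x)).card :=
            Nat.pow_le_pow_right two_pos (Finset.card_le_card (image_subset_erase_image huniq ht))
        _ = 2 ^ ((s.image c).card - 1) := by
            rw [Finset.card_erase_of_mem (Finset.mem_image_of_mem c hx)]
    have hleft := card_lt_of_subset_erase {y ∈ s | y < x} (by grind) (by
      rw [Finset.coe_filter]
      exact hs.inter Set.ordConnected_Iio)
    have hright := card_lt_of_subset_erase {y ∈ s | x < y} (by grind) (by
      rw [Finset.coe_filter]
      exact hs.inter Set.ordConnected_Ioi)
    have hsplit : s ⊆ insert x ({y ∈ s | y < x} ∪ {y ∈ s | x < y}) := by grind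
    have hcolors : (s.image c).card ≠ 0 := Finset.card_ne_zero_of_mem (Finset.mem_image_of_mem c hx)
    calc s.card ≤ {y ∈ s | y < x}.card + {y ∈ s | x < y}.card + 1 :=
          (Finset.card_le_card hsplit).trans <| (Finset.card_insert_le _ _).trans <|
            Nat.add_le_add_right (Finset.card_union_le _ _) 1
      _ < 2 ^ ((s.image c).card - 1) + 2 ^ ((s.image c).card - 1) := by lia
      _ = 2 ^ (s.image c).card := by rw [← two_mul, mul_pow_sub_one hcolors]

theorem IsIntervalConflictFree.card_lt_two_pow_card [Fintype ι] [Fintype α] {c : ι → α}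
    (hc : IsIntervalConflictFree c) : Fintype.card ι < 2 ^ Fintype.card α := by
  classical
  calc Fintype.card ι < 2 ^ (Finset.univ.image c).card :=
        hc.card_lt_two_pow_card_image Finset.univ (by simpa using Set.ordConnected_univ)
    _ ≤ 2 ^ Fintype.card α := Nat.pow_le_pow_right two_pos (Finset.card_le_univ _)

theorem IsIntervalConflictFree.of_exists_lt [LocallyFiniteOrder ι] [Preorder α] {c : ι → α}
    (h : ∀ ⦃x y⦄, x < y → c x = c y → ∃ z ∈ Set.Ioo x y, c x < c z) :
    IsIntervalConflictFree c := by
  intro u v huv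
  obtain ⟨x, hx, hmax⟩ := (Set.finite_Icc u v).exists_maximalFor c _ (Set.nonempty_Icc.2 huv)
  have not_lt_of_mem {z : ι} (hz : z ∈ Set.Icc u v) : ¬ c x < c z :=
    fun hlt => (hmax hz hlt.le).not_gt hlt
  refine ⟨x, hx, fun y hy hyx => ?_⟩
  by_contra hne
  rcases lt_or_gt_of_ne hne with hlt | hlt
  · obtain ⟨z, hz, hcz⟩ := h hlt hyx
    exact not_lt_of_mem ⟨hy.1.trans hz.1.le, hz.2.le.trans hx.2⟩ (hyx ▸ hcz)
  · obtain ⟨z, hz, hcz⟩ := h hlt hyx.symm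
    exact not_lt_of_mem ⟨hx.1.trans hz.1.le, hz.2.le.trans hy.2⟩ hcz

end LinearOrder

theorem exists_padicValNat_two_lt_of_eq {a b : ℕ} (ha : a ≠ 0) (hab : a < b)
    (h : padicValNat 2 a = padicValNat 2 b) :
    ∃ r ∈ Set.Ioo a b, padicValNat 2 a < padicValNat 2 r := by
  have val_two_pow_mul {i m : ℕ} (hm : Odd m) : padicValNat 2 (2 ^ i * m) = i := by
    rw [padicValNat_base_pow_mul one_lt_two hm.pos.ne',
      padicValNat.eq_zero_of_not_dvd hm.not_two_dvd_nat, zero_add]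
  obtain ⟨i, m, hm, rfl⟩ := Nat.exists_eq_two_pow_mul_odd ha
  obtain ⟨j, l, hl, rfl⟩ := Nat.exists_eq_two_pow_mul_odd (Nat.ne_zero_of_lt hab)
  rw [val_two_pow_mul hm, val_two_pow_mul hl] at h
  subst h
  have hml : m < l := Nat.lt_of_mul_lt_mul_left hab
  have hml_succ : m + 1 < l := by grind
  refine ⟨2 ^ i * (m + 1), ⟨by gcongr; lia, by gcongr⟩, ?_⟩
  rw [val_two_pow_mul hm, ← Nat.succ_le_iff, ← padicValNat_dvd_iff_le (by positivity), pow_succ]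
  exact Nat.mul_dvd_mul_left _ hm.add_one.two_dvd

theorem exists_isIntervalConflictFree_fin {n k : ℕ} (h : n < 2 ^ k) :
    ∃ c : Fin n → Fin k, IsIntervalConflictFree c := by
  have val_lt (x : Fin n) : padicValNat 2 (x + 1) < k :=
    (padicValNat_le_nat_log _).trans_lt (Nat.log_lt_of_lt_pow x.val.succ_ne_zero (by lia))
  refine ⟨fun x => ⟨padicValNat 2 (x + 1), val_lt x⟩, .of_exists_lt fun x y hxy hc => ?_⟩
  obtain ⟨r, ⟨hxr, hry⟩, hval⟩ := exists_padicValNat_two_lt_of_eq x.val.succ_ne_zero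
    (Nat.succ_lt_succ hxy) (Fin.mk.inj hc)
  obtain ⟨z, rfl⟩ := Nat.exists_eq_add_one_of_ne_zero (Nat.ne_zero_of_lt hxr)
  exact ⟨⟨z, by lia⟩, ⟨Nat.lt_of_succ_lt_succ hxr, Nat.lt_of_succ_lt_succ hry⟩, hval⟩

theorem exists_isVCFCColoring_pathGraph_iff {n k : ℕ} :
    (∃ c : Fin n → Fin k, IsVCFCColoring (pathGraph n) k c) ↔ n < 2 ^ k := by
  have hiff (c : Fin n → Fin k) :
      IsVCFCColoring (pathGraph n) k c ↔ IsIntervalConflictFree c :=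
    isVCFCColoring_hasse_iff (pathGraph_preconnected n)
  simp only [hiff]
  exact ⟨fun ⟨_, hc⟩ => by simpa using hc.card_lt_two_pow_card, exists_isIntervalConflictFree_fin⟩

/-- For every `n ≥ 2`, the path on `n` vertices satisfies `vcfc(Pₙ) = ⌈log₂(n+1)⌉`. -/
theorem vcfc_pathGraph (n : ℕ) (h2 : 2 ≤ n) :
    vcfc (SimpleGraph.pathGraph n) = Nat.clog 2 (n + 1) := by
  have hcolors : {k | ∃ c : Fin n → Fin k, IsVCFCColoring (pathGraph n) k c} =
      Set.Ici (Nat.clog 2 (n + 1)) := by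
    ext k
    rw [Set.mem_ofPred_eq, exists_isVCFCColoring_pathGraph_iff, Set.mem_Ici,
      Nat.clog_le_iff_le_pow one_lt_two, Nat.succ_le_iff]
  rw [vcfc, hcolors, csInf_Ici]
end

section
/- Let G be a connected simple graph of order at least 3. Then vcfc(G) = 2 if and only if G is 2-connected or G has exactly one cut vertex. -/
open SimpleGraph

/-!
If `w` is the only possible cut vertex, give `w` a color of its own: any two vertices `u` and `v`
are joined by a path through `w`. By induction along a walk from `v` to `w`, a neighbor `v'` of `v`
is joined to `v` by a path through `w`, which the edge `v' v` closes to a cycle; a walk from `u` to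
`w` avoiding `v` enters this cycle at a vertex other than `v`, and from there one of the two arcs
to `v` contains `w`.

Conversely, let `x ≠ y` be cut vertices of a graph with a conflict-free `2`-coloring. Then `x` cuts
off from `y` some vertex `a` colored differently from `x`, and `y` cuts off from `x` some vertex `b`
colored differently from `y`. Every path from `a` to `b` contains `x` and `y`, hence shows both
colors in each of the disjoint pairs `{a, x}` and `{b, y}`, and is not conflict-free.
-/

theorem length_filter_eq_one_iff_existsUnique {α : Type*} {l : List α} (hl : l.Nodup)
    (p : α → Prop) [DecidablePred p] :
    (l.filter (fun a => p a)).length = 1 ↔ ∃! a, a ∈ l ∧ p a := by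
  classical
  rw [← List.toFinset_card_of_nodup (hl.filter _), Finset.card_eq_one_iff_existsUnique]
  simp only [List.mem_toFinset, List.mem_filter, decide_eq_true_eq]

theorem subsingleton_setOf_not_iff {α : Type*} {p : α → Prop} :
    {a | ¬ p a}.Subsingleton ↔ (∀ a, p a) ∨ ∃! a, ¬ p a := by
  constructor
  · intro h
    refine or_iff_not_imp_left.mpr fun hne => ?_
    obtain ⟨a, ha⟩ := not_forall.mp hne
    exact ⟨a, ha, fun b hb => h hb ha⟩
  · rintro (h | h) a ha b hb
    · exact absurd (h a) ha
    · exact h.unique ha hb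

/-- `Separates G x a b`: the vertex `x` lies on every walk from `a` to `b`. The endpoints are
allowed as values of `x`, so that `a` and `b` themselves separate `a` from `b`. -/
def Separates {V : Type*} (G : SimpleGraph V) (x a b : V) : Prop :=
  ∀ p : G.Walk a b, x ∈ p.support

/-- A cut vertex of `G`, encoded as a vertex whose deletion leaves a graph that is not connected.
The empty graph counts as disconnected, so the vertex of a one-vertex graph is a cut vertex. -/
def IsCutVertex {V : Type*} (G : SimpleGraph V) (x : V) : Prop :=
  ¬ (G.induce {u | u ≠ x}).Connected

section Separation

variable {V : Type*} {G : SimpleGraph V} {a b x y z : V}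

theorem separates_self_iff : Separates G x a a ↔ x = a :=
  ⟨fun h => Walk.mem_support_nil_iff.mp (h Walk.nil), fun h p => h ▸ p.start_mem_support⟩

theorem Separates.symm (h : Separates G x a b) : Separates G x b a := fun p => by
  simpa only [Walk.support_reverse, List.mem_reverse] using h p.reverse

theorem Separates.of_walk (h : Separates G x a y) (p : G.Walk a z) (hp : x ∉ p.support) :
    Separates G x z y := fun q =>
  ((Walk.mem_support_append_iff p q).mp (h (p.append q))).resolve_left hp

theorem Separates.of_separates (hxy : x ≠ y) (hx : Separates G x a y) (hy : Separates G y b x)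
    (hbx : G.Reachable b x) : Separates G x a b := by
  classical
  obtain ⟨p, hp⟩ := hbx.exists_isPath
  have avoids : x ∉ (p.takeUntil y (hy p)).support :=
    Walk.endpoint_notMem_support_takeUntil hp (hy p) hxy
  exact (hx.symm.of_walk (p.takeUntil y (hy p)).reverse (by simpa using avoids)).symm

theorem isCutVertex_iff_exists_separates (hyx : y ≠ x) :
    IsCutVertex G x ↔ ∃ a ≠ x, Separates G x a y := by
  rw [IsCutVertex, ← not_iff_not, not_not]
  push Not
  refine ⟨fun h a ha => ?_, fun h => ?_⟩
  · obtain ⟨q⟩ := h.preconnected ⟨a, ha⟩ ⟨y, hyx⟩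
    intro hsep
    let p : G.Walk a y := q.map (Embedding.induce {u | u ≠ x}).toHom
    obtain ⟨z, -, hz⟩ := List.mem_map.mp (Walk.support_map _ q ▸ hsep p)
    exact z.2 hz
  · refine connected_iff_exists_forall_reachable _ |>.mpr ⟨⟨y, hyx⟩, fun ⟨a, ha⟩ => ?_⟩
    obtain ⟨p, hp⟩ := not_forall.mp (h a ha)
    exact Reachable.symm ⟨p.induce {u | u ≠ x} fun z hz hzx => hp (hzx ▸ hz)⟩

end Separation

section PathsThroughAVertex

variable {V : Type*} {G : SimpleGraph V} {u v v' w x : V}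

theorem isPath_append_of_inter {p : G.Walk u v} {q : G.Walk v w} (hp : p.IsPath) (hq : q.IsPath)
    (h : ∀ z ∈ p.support, z ∈ q.support → z = v) : (p.append q).IsPath := by
  rw [Walk.isPath_def, Walk.support_append, List.nodup_append']
  have hv : v ∉ q.support.tail :=
    (List.nodup_cons.mp (q.cons_tail_support.symm ▸ hq.support_nodup)).1
  exact ⟨hp.support_nodup, hq.support_nodup.tail, fun z hz hzq =>
    hv (h z hz (List.mem_of_mem_tail hzq) ▸ hzq)⟩

-- The path `r` and the edge `v' v` form a cycle; take the arc from `x` to `v` containing `w`.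
theorem exists_isPath_through_of_adj_ends {r : G.Walk v v'} (hr : r.IsPath) (hadj : G.Adj v' v)
    (hw : w ∈ r.support) (hx : x ∈ r.support) (hxv : x ≠ v) :
    ∃ q : G.Walk x v, q.IsPath ∧ w ∈ q.support ∧ q.support ⊆ r.support := by
  obtain ⟨s, t, hs, ht, rfl⟩ := hr.mem_support_iff_exists_append.mp hx
  rcases (Walk.mem_support_append_iff s t).mp hw with hw | hw
  · exact ⟨s.reverse, hs.reverse, by simpa using hw, by simp⟩
  · have hv : v ∉ t.support := fun hv =>
      hr.ne_of_mem_support_of_append hxv.symm s.start_mem_support hv rfl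
    refine ⟨t.concat hadj, ht.concat hv hadj, by simp [hw], fun z hz => ?_⟩
    rw [Walk.support_concat, List.mem_append, List.mem_singleton] at hz
    rw [Walk.mem_support_append_iff]
    exact hz.elim Or.inr fun hzv => Or.inl (hzv ▸ s.start_mem_support)

theorem exists_isPath_through_of_walk_avoiding {r : G.Walk v v'} (hr : r.IsPath)
    (hadj : G.Adj v' v) (hw : w ∈ r.support) (t : G.Walk u w) (hv : v ∉ t.support) :
    ∃ p : G.Walk u v, p.IsPath ∧ w ∈ p.support := by
  classical
  have ht : t.bypass.IsPath := t.bypass_isPath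
  obtain ⟨x, hxr, hxt, first⟩ :=
    t.bypass.exists_mem_support_forall_mem_support_imp_eq r.support.toFinset
      ⟨w, by simp [hw]⟩
  have hxv : x ≠ v := fun h => hv (h ▸ t.support_bypass_subset_support hxt)
  obtain ⟨q, hq, hwq, hqr⟩ :=
    exists_isPath_through_of_adj_ends hr hadj hw (List.mem_toFinset.mp hxr) hxv
  refine ⟨(t.bypass.takeUntil x hxt).append q, isPath_append_of_inter (ht.takeUntil hxt) hq ?_, ?_⟩
  · exact fun z hz hzq => first z (List.mem_toFinset.mpr (hqr hzq)) hz
  · exact (Walk.mem_support_append_iff _ _).mpr (Or.inr hwq)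

theorem exists_isPath_through_of_forall_isCutVertex_eq (hG : G.Preconnected)
    (h : ∀ x, IsCutVertex G x → x = w) (huv : u ≠ v) :
    ∃ p : G.Walk u v, p.IsPath ∧ w ∈ p.support := by
  obtain ⟨s⟩ := hG v w
  induction s generalizing u with
  | nil =>
    obtain ⟨p, hp⟩ := (hG u _).exists_isPath
    exact ⟨p, hp, p.end_mem_support⟩
  | @cons v v' w hadj s ih =>
    obtain rfl | hvw := eq_or_ne v w
    · obtain ⟨p, hp⟩ := (hG u v).exists_isPath
      exact ⟨p, hp, p.end_mem_support⟩
    obtain ⟨r, hr, hwr⟩ := ih h hadj.ne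
    have hsep : ¬ Separates G v u w := fun hsep =>
      hvw (h v ((isCutVertex_iff_exists_separates hvw.symm).mpr ⟨u, huv, hsep⟩))
    obtain ⟨t, hvt⟩ := not_forall.mp hsep
    exact exists_isPath_through_of_walk_avoiding hr hadj.symm hwr t hvt

end PathsThroughAVertex

section Colorings

variable {V : Type*} {G : SimpleGraph V} {k : ℕ} {c : V → Fin k} {x y : V}

theorem isVCFCColoring_iff :
    IsVCFCColoring G k c ↔ ∀ u v : V, u ≠ v → ∃ p : G.Walk u v, p.IsPath ∧
      ∃ z ∈ p.support, ∀ t ∈ p.support, c t = c z → t = z := by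
  refine forall₃_congr fun u v _ => exists_congr fun p => and_congr_right fun hp => ?_
  simp only [length_filter_eq_one_iff_existsUnique hp.support_nodup]
  constructor
  · rintro ⟨i, z, ⟨hz, rfl⟩, hunique⟩
    exact ⟨z, hz, fun t ht htz => hunique t ⟨ht, htz⟩⟩
  · rintro ⟨z, hz, hunique⟩
    exact ⟨c z, z, ⟨hz, rfl⟩, fun t ht => hunique t ht.1 ht.2⟩

theorem IsVCFCColoring.preconnected (hc : IsVCFCColoring G k c) : G.Preconnected := fun u v => by
  obtain rfl | huv := eq_or_ne u v
  · rfl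
  · exact ⟨(hc u v huv).choose⟩

theorem IsVCFCColoring.exists_isPath_exists_color_ne (hc : IsVCFCColoring G k c) {u v : V}
    (huv : u ≠ v) : ∃ p : G.Walk u v, p.IsPath ∧ ∃ z ∈ p.support, c z ≠ c v := by
  obtain ⟨p, hp, z, hz, hunique⟩ := isVCFCColoring_iff.mp hc u v huv
  refine ⟨p, hp, ?_⟩
  by_contra! mono
  have hend : v = z := hunique v p.end_mem_support (mono z hz).symm
  have hstart : u = z :=
    hunique u p.start_mem_support ((mono u p.start_mem_support).trans (mono z hz).symm)
  exact huv (hstart.trans hend.symm)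

theorem IsVCFCColoring.two_le [Nontrivial V] (hc : IsVCFCColoring G k c) : 2 ≤ k := by
  obtain ⟨u, v, huv⟩ := exists_pair_ne V
  obtain ⟨-, -, z, -, hzv⟩ := hc.exists_isPath_exists_color_ne huv
  have := Fin.val_ne_of_ne hzv
  lia

theorem vcfc_eq_two_iff_exists [Nontrivial V] :
    vcfc G = 2 ↔ ∃ c : V → Fin 2, IsVCFCColoring G 2 c := by
  constructor
  · intro h
    have hne : {k | ∃ c : V → Fin k, IsVCFCColoring G k c}.Nonempty :=
      Nat.nonempty_of_pos_sInf (h ▸ two_pos : 0 < vcfc G)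
    exact h ▸ Nat.sInf_mem hne
  · exact fun h => le_antisymm (Nat.sInf_le h) (le_csInf ⟨2, h⟩ fun _ ⟨_, hc⟩ => hc.two_le)

theorem exists_isVCFCColoring_two_of_exists_isPath_through {w : V}
    (h : ∀ u v, u ≠ v → ∃ p : G.Walk u v, p.IsPath ∧ w ∈ p.support) :
    ∃ c : V → Fin 2, IsVCFCColoring G 2 c := by
  classical
  refine ⟨fun x => if x = w then 0 else 1, isVCFCColoring_iff.mpr fun u v huv => ?_⟩
  obtain ⟨p, hp, hw⟩ := h u v huv
  exact ⟨p, hp, w, hw, fun t _ ht => by simpa using ht⟩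

theorem IsVCFCColoring.exists_separates_color_ne (hc : IsVCFCColoring G k c)
    (hx : IsCutVertex G x) (hyx : y ≠ x) : ∃ a, c a ≠ c x ∧ Separates G x a y := by
  classical
  obtain ⟨a, hax, hsep⟩ := (isCutVertex_iff_exists_separates hyx).mp hx
  obtain ⟨p, hp, z, hz, hzx⟩ := hc.exists_isPath_exists_color_ne hax
  have avoids : x ∉ (p.takeUntil z hz).support :=
    Walk.endpoint_notMem_support_takeUntil hp hz fun hxz => hzx (hxz ▸ rfl)
  exact ⟨z, hzx, hsep.of_walk _ avoids⟩

theorem IsVCFCColoring.eq_of_isCutVertex {c : V → Fin 2} (hc : IsVCFCColoring G 2 c)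
    (hx : IsCutVertex G x) (hy : IsCutVertex G y) : x = y := by
  by_contra hxy
  obtain ⟨a, hca, ha⟩ := hc.exists_separates_color_ne hx (Ne.symm hxy)
  obtain ⟨b, hcb, hb⟩ := hc.exists_separates_color_ne hy hxy
  have hxab : Separates G x a b := ha.of_separates hxy hb (hc.preconnected b x)
  have hyab : Separates G y a b := (hb.of_separates (Ne.symm hxy) ha (hc.preconnected a y)).symm
  have hay : a ≠ y := fun h => hxy (separates_self_iff.mp (h ▸ ha))
  have hbx : b ≠ x := fun h => hxy (separates_self_iff.mp (h ▸ hb)).symm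
  have hab : a ≠ b := by
    rintro rfl
    exact hca (congrArg c (separates_self_iff.mp hxab).symm)
  obtain ⟨p, -, z, -, hunique⟩ := isVCFCColoring_iff.mp hc a b hab
  have hax : a = z ∨ x = z :=
    (show c a = c z ∨ c x = c z by lia).imp (hunique a p.start_mem_support) (hunique x (hxab p))
  have hby : b = z ∨ y = z :=
    (show c b = c z ∨ c y = c z by lia).imp (hunique b p.end_mem_support) (hunique y (hyab p))
  grind

theorem exists_isVCFCColoring_two_iff (hG : G.Connected) :
    (∃ c : V → Fin 2, IsVCFCColoring G 2 c) ↔ {v | IsCutVertex G v}.Subsingleton := by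
  refine ⟨fun ⟨c, hc⟩ x hx y hy => hc.eq_of_isCutVertex hx hy, fun h => ?_⟩
  obtain ⟨w, hw⟩ : ∃ w, ∀ x, IsCutVertex G x → x = w := by
    by_cases hcut : ∃ w, IsCutVertex G w
    · exact hcut.imp fun w hw x hx => h hx hw
    · exact hG.nonempty.elim fun w => ⟨w, fun x hx => (hcut ⟨x, hx⟩).elim⟩
  exact exists_isVCFCColoring_two_of_exists_isPath_through fun u v huv =>
    exists_isPath_through_of_forall_isCutVertex_eq hG.preconnected hw huv

end Colorings

theorem vcfc_eq_two_iff_general {V : Type*} [Nontrivial V] {G : SimpleGraph V} (hG : G.Connected) :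
    vcfc G = 2 ↔
      ((∀ v : V, (G.induce {u | u ≠ v}).Connected) ∨
        (∃! v : V, ¬ (G.induce {u | u ≠ v}).Connected)) :=
  vcfc_eq_two_iff_exists.trans <|
    (exists_isVCFCColoring_two_iff hG).trans subsingleton_setOf_not_iff

/-- For a connected graph `G` of order at least 3, `vcfc(G) = 2` iff `G` is 2-connected
(every vertex-deleted subgraph is connected) or `G` has exactly one cut vertex. -/
theorem vcfc_eq_two_iff {V : Type*} [Fintype V] (G : SimpleGraph V) (hG : G.Connected)
    (h3 : 3 ≤ Fintype.card V) :
    vcfc G = 2 ↔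
      ((∀ v : V, (G.induce {u | u ≠ v}).Connected) ∨
        (∃! v : V, ¬ (G.induce {u | u ≠ v}).Connected)) := by
  have : Nontrivial V := Fintype.one_lt_card_iff_nontrivial.mp (by lia)
  exact vcfc_eq_two_iff_general hG
end

section
/- For every noncomplete 2-connected simple graph G, cfc(G) = 2. -/
open SimpleGraph

/-- An edge coloring with `k` colors makes `G` conflict-free connected if any two
distinct vertices are joined by a path on which some color is used on exactly one edge. -/
def IsCFCColoring {V : Type*} (G : SimpleGraph V) (k : ℕ) (c : Sym2 V → Fin k) : Prop :=
  ∀ u v : V, u ≠ v → ∃ p : G.Walk u v, p.IsPath ∧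
    ∃ i : Fin k, (p.edges.filter (fun e => c e = i)).length = 1

/-- The conflict-free connection number: the least number of colors in a
conflict-free connected edge coloring. -/
noncomputable def cfcNum {V : Type*} (G : SimpleGraph V) : ℕ :=
  sInf {k | ∃ c : Sym2 V → Fin k, IsCFCColoring G k c}

/-!
Let `G` be 2-connected and fix an edge `e`. Any two distinct vertices are joined by a path through
`e`: for a fixed start `u`, the ends `v` of such paths are closed under passing to a neighbour
`w ≠ u` of `v`. Extending the path by the edge `vw` can only fail if the path already meets `w`; if
it does so before traversing `e`, its part from `w` to `v` closes up with `vw` to a cycle through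
`e` and `w`. A path from `u` avoiding `w` reaches this cycle at some `z ≠ w`, and one of the two
ways around the cycle from `z` to `w` traverses `e`.

Hence giving `e` one color and all other edges a second one is conflict-free. With a single color
a conflict-free path is an edge, so one color suffices only for complete graphs.
-/

section Paths

variable {V : Type*} {G : SimpleGraph V} {u v w z : V} {e : Sym2 V}

theorem exists_isPath_notMem_support (hw : (G.induce {x | x ≠ w}).Preconnected)
    (hu : u ≠ w) (hv : v ≠ w) : ∃ p : G.Walk u v, p.IsPath ∧ w ∉ p.support := by
  obtain ⟨p, hp⟩ := hw.exists_isPath ⟨u, hu⟩ ⟨v, hv⟩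
  let ι := Embedding.induce (G := G) {x | x ≠ w}
  refine ⟨p.map ι.toHom, hp.map ι.injective, fun hmem => ?_⟩
  obtain ⟨x, -, hx⟩ := List.mem_map.1 (Walk.support_map ι.toHom p ▸ hmem)
  exact x.2 hx

theorem isPath_append {p : G.Walk u v} {q : G.Walk v w} (hp : p.IsPath) (hq : q.IsPath)
    (hpq : ∀ x ∈ p.support, x ∈ q.support → x = v) : (p.append q).IsPath := by
  have hv : v ∉ q.support.tail := (List.nodup_cons.1 (q.cons_tail_support ▸ hq.support_nodup)).1
  rw [Walk.isPath_def, Walk.support_append, List.nodup_append']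
  refine ⟨hp.support_nodup, hq.support_nodup.tail, fun x hxp hxq => ?_⟩
  exact hv (hpq x hxp (List.mem_of_mem_tail hxq) ▸ hxq)

theorem exists_isPath_meeting_only_at_end (hw : (G.induce {x | x ≠ w}).Preconnected)
    (hu : u ≠ w) (hv : v ≠ w) (q : G.Walk w v) :
    ∃ z ∈ q.support, z ≠ w ∧
      ∃ p : G.Walk u z, p.IsPath ∧ ∀ x ∈ p.support, x ∈ q.support → x = z := by
  classical
  obtain ⟨p, hp, hwp⟩ := exists_isPath_notMem_support hw hu hv
  obtain ⟨z, hzq, hzp, hfirst⟩ := p.exists_mem_support_forall_mem_support_imp_eq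
    q.support.toFinset ⟨v, by simp⟩
  exact ⟨z, List.mem_toFinset.1 hzq, fun hzw => hwp (hzw ▸ hzp), p.takeUntil z hzp,
    hp.takeUntil hzp, fun x hxp hxq => hfirst x (List.mem_toFinset.2 hxq) hxp⟩

-- The cycle is `a.append b` closed up by the edge `vw`.
theorem exists_isPath_mem_edges_of_cycle {p : G.Walk u z} {a : G.Walk w z} {b : G.Walk z v}
    (hp : p.IsPath) (hab : (a.append b).IsPath) (hvw : G.Adj v w) (hzw : z ≠ w)
    (hmeet : ∀ x ∈ p.support, x ∈ (a.append b).support → x = z)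
    (he : e ∈ (a.append b).edges) : ∃ q : G.Walk u w, q.IsPath ∧ e ∈ q.edges := by
  simp only [Walk.mem_support_append_iff] at hmeet
  rw [Walk.edges_append, List.mem_append] at he
  rcases he with hea | heb
  · refine ⟨p.append a.reverse, isPath_append hp hab.of_append_left.reverse ?_, ?_⟩
    · intro x hxp hxa
      rw [Walk.support_reverse, List.mem_reverse] at hxa
      exact hmeet x hxp (.inl hxa)
    · simp [hea]
  · have hpb : (p.append b).IsPath :=
      isPath_append hp hab.of_append_right fun x hxp hxb => hmeet x hxp (.inr hxb)
    have hwp : w ∉ p.support := fun h => hzw (hmeet w h (.inl a.start_mem_support)).symm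
    have hwb : w ∉ b.support :=
      fun h => hab.ne_of_mem_support_of_append hzw.symm a.start_mem_support h rfl
    refine ⟨(p.append b).concat hvw, hpb.concat ?_ hvw, ?_⟩
    · simp [Walk.mem_support_append_iff, hwp, hwb]
    · simp [Walk.edges_concat, heb]

theorem exists_isPath_mem_edges_of_adj (hw : (G.induce {x | x ≠ w}).Preconnected)
    (hu : u ≠ w) (hvw : G.Adj v w) {p : G.Walk u v} (hp : p.IsPath) (he : e ∈ p.edges) :
    ∃ q : G.Walk u w, q.IsPath ∧ e ∈ q.edges := by
  by_cases hwp : w ∈ p.support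
  · obtain ⟨p₁, p₂, hp₁, hp₂, rfl⟩ := hp.mem_support_iff_exists_append.1 hwp
    rw [Walk.edges_append, List.mem_append] at he
    rcases he with he | he
    · exact ⟨p₁, hp₁, he⟩
    obtain ⟨z, hz, hzw, q, hq, hmeet⟩ := exists_isPath_meeting_only_at_end hw hu hvw.ne p₂
    obtain ⟨a, b, rfl⟩ := Walk.mem_support_iff_exists_append.1 hz
    exact exists_isPath_mem_edges_of_cycle hq hp₂ hvw hzw hmeet he
  · exact ⟨p.concat hvw, hp.concat hwp hvw, by simp [Walk.edges_concat, he]⟩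

theorem exists_ne_exists_isPath_mem_edges (hconn : ∀ w, (G.induce {x | x ≠ w}).Preconnected)
    (he : e ∈ G.edgeSet) (u : V) :
    ∃ v ≠ u, ∃ p : G.Walk u v, p.IsPath ∧ e ∈ p.edges := by
  induction e with | h x y
  have hxy : G.Adj x y := he
  by_cases huy : u = y
  · subst huy
    exact ⟨x, hxy.ne, hxy.symm.toWalk, Walk.IsPath.of_adj hxy.symm, by simp [Sym2.eq_swap]⟩
  · obtain ⟨p, hp, hyp⟩ := exists_isPath_notMem_support (hconn y) huy hxy.ne
    exact ⟨y, Ne.symm huy, p.concat hxy, hp.concat hyp hxy, by simp [Walk.edges_concat]⟩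

theorem exists_isPath_mem_edges (hconn : ∀ w, (G.induce {x | x ≠ w}).Preconnected)
    (he : e ∈ G.edgeSet) (huv : u ≠ v) : ∃ p : G.Walk u v, p.IsPath ∧ e ∈ p.edges := by
  obtain ⟨v₀, hv₀, hbase⟩ := exists_ne_exists_isPath_mem_edges hconn he u
  obtain ⟨q, -, huq⟩ := exists_isPath_notMem_support (hconn u) hv₀ huv.symm
  clear hv₀ huv
  induction q with
  | nil => exact hbase
  | @cons a b _ hab q ih =>
    rw [Walk.support_cons, List.mem_cons, not_or] at huq
    have hub : u ≠ b := fun hub => huq.2 (hub ▸ q.start_mem_support)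
    obtain ⟨p, hp, hep⟩ := hbase
    exact ih (exists_isPath_mem_edges_of_adj (hconn b) hub hab hp hep) huq.2

theorem preconnected_of_preconnected_induce_ne (h3 : 3 ≤ ENat.card V)
    (hconn : ∀ w, (G.induce {x | x ≠ w}).Preconnected) : G.Preconnected := by
  intro u v
  obtain ⟨w, hwu, hwv⟩ := ENat.exists_ne_ne_of_three_le h3 u v
  obtain ⟨p, -⟩ := exists_isPath_notMem_support (hconn w) hwu.symm hwv.symm
  exact p.reachable

end Paths

section Colorings

variable {V : Type*} {G : SimpleGraph V} {k : ℕ} {c : Sym2 V → Fin k}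

theorem isCFCColoring_single [DecidableEq V] {e : Sym2 V}
    (he : ∀ u v : V, u ≠ v → ∃ p : G.Walk u v, p.IsPath ∧ e ∈ p.edges) :
    IsCFCColoring G 2 (Pi.single e 1) := by
  intro u v huv
  obtain ⟨p, hp, hep⟩ := he u v huv
  have hcolor (f : Sym2 V) : (Pi.single e 1 : Sym2 V → Fin 2) f = 1 ↔ f = e := by
    by_cases hf : f = e <;> simp [hf]
  refine ⟨p, hp, 1, ?_⟩
  simp only [hcolor, ← List.countP_eq_length_filter]
  exact hp.isTrail.count_edges_eq_one hep

theorem IsCFCColoring.eq_top_of_le_one (hk : k ≤ 1) (hc : IsCFCColoring G k c) : G = ⊤ := by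
  have := Fin.subsingleton_iff_le_one.2 hk
  refine eq_top_iff_forall_ne_adj.2 fun u v huv => ?_
  obtain ⟨p, -, i, hi⟩ := hc u v huv
  have hall : p.edges.filter (fun e => c e = i) = p.edges :=
    List.filter_eq_self.2 fun e _ => decide_eq_true (Subsingleton.elim (c e) i)
  rw [hall, Walk.length_edges] at hi
  exact Walk.adj_of_length_eq_one hi

theorem IsCFCColoring.cfcNum_le (hc : IsCFCColoring G k c) : cfcNum G ≤ k :=
  Nat.sInf_le ⟨c, hc⟩

theorem IsCFCColoring.two_le_cfcNum (hc : IsCFCColoring G k c) (hG : G ≠ ⊤) : 2 ≤ cfcNum G := by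
  refine le_csInf ⟨k, c, hc⟩ ?_
  rintro l ⟨d, hd⟩
  by_contra! hl
  exact hG (hd.eq_top_of_le_one (Nat.le_of_lt_succ hl))

end Colorings

theorem cfc_two_connected_general {V : Type*} (G : SimpleGraph V)
    (h3 : 3 ≤ ENat.card V)
    (h2conn : ∀ v : V, (G.induce {u | u ≠ v}).Connected)
    (hnc : G ≠ ⊤) :
    cfcNum G = 2 := by
  classical
  have hconn (w : V) : (G.induce {x | x ≠ w}).Preconnected := (h2conn w).preconnected
  have : Nontrivial V :=
    (ENat.one_lt_card_iff_nontrivial V).1 (lt_of_lt_of_le (by norm_num) h3)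
  obtain ⟨x⟩ : Nonempty V := inferInstance
  obtain ⟨y, hxy⟩ :=
    (preconnected_of_preconnected_induce_ne h3 hconn).exists_adj_of_nontrivial x
  have hc : IsCFCColoring G 2 (Pi.single s(x, y) 1) :=
    isCFCColoring_single fun _ _ => exists_isPath_mem_edges hconn hxy
  exact le_antisymm hc.cfcNum_le (hc.two_le_cfcNum hnc)

/-- Every noncomplete 2-connected graph `G` satisfies `cfc(G) = 2`. -/
theorem cfc_two_connected {V : Type*} [Fintype V] (G : SimpleGraph V)
    (h3 : 3 ≤ Fintype.card V)
    (h2conn : ∀ v : V, (G.induce {u | u ≠ v}).Connected)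
    (hnc : G ≠ ⊤) :
    cfcNum G = 2 :=
  cfc_two_connected_general G (by simpa using mod_cast h3) h2conn hnc
end

section
/- Let G be a nontrivial connected simple graph of order n. Then 1 ≤ cfc(G) ≤ n−1; moreover cfc(G) = 1 if and only if G is the complete graph K_n, and cfc(G) = n−1 if and only if G is the star K_{1,n-1}. -/
open SimpleGraph

/-!
Rainbow coloring a spanning tree shows `cfc(G) ≤ n - 1`. A color can be saved whenever `G` has two
disjoint edges `e` and `f`: put both into a spanning tree and give them the same color. A tree path
with at least two edges starts with two adjacent edges, so one of these is neither `e` nor `f` and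
its color is unique. Hence `cfc(G) = n - 1` forces the edges of `G` to meet pairwise, and such a
connected graph is complete or a star. Conversely paths in a tree are unique, so a conflict-free
connected coloring of a tree gives distinct colors to the edges at any one vertex; for a star this
requires `n - 1` colors.
-/

section

variable {V α : Type*} {G H : SimpleGraph V} {c : Sym2 V → α} {u v : V}

/-- A walk is conflict-free if some color is used on exactly one of its edges. The color is
encoded by the edge carrying it; an edge traversed repeatedly counts once, which agrees with the
count in `IsCFCColoring` for trails. -/
def IsConflictFree (c : Sym2 V → α) (p : G.Walk u v) : Prop :=
  ∃ e ∈ p.edges, ∀ e' ∈ p.edges, c e' = c e → e' = e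

/-- The notion of conflict-free connected coloring, with an arbitrary type of colors. -/
def ConflictFreeConnects (c : Sym2 V → α) (G : SimpleGraph V) : Prop :=
  ∀ u v : V, u ≠ v → ∃ p : G.Walk u v, p.IsPath ∧ IsConflictFree c p

theorem exists_length_filter_eq_one_iff {β : Type*} [DecidableEq α] {l : List β} (hl : l.Nodup)
    {f : β → α} :
    (∃ i, (l.filter (fun b => f b = i)).length = 1) ↔ ∃ a ∈ l, ∀ b ∈ l, f b = f a → b = a := by
  constructor
  · rintro ⟨i, hi⟩
    obtain ⟨a, ha⟩ := List.length_eq_one_iff.1 hi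
    have mem_iff (b : β) : b ∈ l ∧ f b = i ↔ b = a := by
      simpa using congrArg (b ∈ ·) ha
    obtain ⟨hal, hai⟩ := (mem_iff a).2 rfl
    exact ⟨a, hal, fun b hb hba => (mem_iff b).1 ⟨hb, hba.trans hai⟩⟩
  · rintro ⟨a, ha, huniq⟩
    have hperm : (l.filter (fun b => f b = f a)).Perm [a] :=
      (List.perm_ext_iff_of_nodup (hl.filter _) (List.nodup_singleton a)).2 fun b => by
        simp only [List.mem_filter, decide_eq_true_eq, List.mem_singleton]
        exact ⟨fun hb => huniq b hb.1 hb.2, by rintro rfl; exact ⟨ha, rfl⟩⟩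
    exact ⟨f a, hperm.length_eq⟩

theorem isCFCColoring_iff {k : ℕ} {c : Sym2 V → Fin k} :
    IsCFCColoring G k c ↔ ConflictFreeConnects c G :=
  forall₃_congr fun _ _ _ => exists_congr fun _ => and_congr_right fun hp =>
    exists_length_filter_eq_one_iff hp.isTrail.edges_nodup

theorem IsConflictFree.of_length_eq_one {p : G.Walk u v} (hp : p.length = 1) :
    IsConflictFree c p := by
  rw [← p.length_edges, List.length_eq_one_iff] at hp
  obtain ⟨e, he⟩ := hp
  simp [IsConflictFree, he]

theorem ConflictFreeConnects.mono (hc : ConflictFreeConnects c H) (hHG : H ≤ G) :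
    ConflictFreeConnects c G := by
  intro u v huv
  obtain ⟨p, hp, e, he, huniq⟩ := hc u v huv
  exact ⟨p.mapLe hHG, (Walk.isPath_mapLe hHG).2 hp, e, by simpa using he, by simpa using huniq⟩

theorem ConflictFreeConnects.comp_injOn {β : Type*} {φ : α → β} (hc : ConflictFreeConnects c G)
    (hφ : Set.InjOn φ (c '' G.edgeSet)) : ConflictFreeConnects (φ ∘ c) G := by
  intro u v huv
  obtain ⟨p, hp, e, he, huniq⟩ := hc u v huv
  have mem_image {e'} (he' : e' ∈ p.edges) : c e' ∈ c '' G.edgeSet :=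
    Set.mem_image_of_mem c (p.edges_subset_edgeSet he')
  exact ⟨p, hp, e, he, fun e' he' h => huniq e' he' (hφ (mem_image he') (mem_image he) h)⟩

theorem conflictFreeConnects_id (hG : G.Preconnected) : ConflictFreeConnects id G := by
  intro u v huv
  obtain ⟨p, hp⟩ := (hG u v).exists_isPath
  have hne : p.edges ≠ [] := fun h => huv (Walk.edges_eq_nil.1 h).eq
  exact ⟨p, hp, p.edges.head hne, List.head_mem hne, fun _ _ h => h⟩

theorem conflictFreeConnects_top : ConflictFreeConnects c ⊤ := by
  intro u v huv
  exact ⟨Adj.toWalk huv, by simp [huv], .of_length_eq_one (by simp)⟩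

theorem ConflictFreeConnects.eq_top [Subsingleton α] (hc : ConflictFreeConnects c G) : G = ⊤ := by
  refine top_unique fun u v huv => ?_
  obtain ⟨p, hp, e, he, huniq⟩ := hc u v huv
  have hsub : p.edges ⊆ [e] := fun e' he' => by
    simpa using huniq e' he' (Subsingleton.elim _ _)
  have hle : p.length ≤ 1 := by
    simpa using (hp.isTrail.edges_nodup.subperm hsub).length_le
  have hpos : 0 < p.length := p.length_edges ▸ List.length_pos_of_mem he
  exact Walk.adj_of_length_eq_one (hle.antisymm hpos)

theorem isConflictFree_update_id_of_disjoint [DecidableEq V] {e f : Sym2 V}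
    (hef : ∀ x ∈ e, x ∉ f) {p : G.Walk u v} (hp : p.IsPath) (huv : u ≠ v) :
    IsConflictFree (Function.update id f e) p := by
  have of_ne {g} (hg : g ∈ p.edges) (hge : g ≠ e) (hgf : g ≠ f) :
      IsConflictFree (Function.update id f e) p := by
    refine ⟨g, hg, fun g' _ hcolor => ?_⟩
    obtain rfl | hg'f := eq_or_ne g' f
    · exact absurd (by simpa [hgf] using hcolor.symm) hge
    · simpa [hgf, hg'f] using hcolor
  match p, hp with
  | .nil, _ => exact absurd rfl huv
  | .cons _ .nil, _ => exact .of_length_eq_one rfl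
  | .cons (v := x) h (.cons (v := y) h' q), hp =>
    have hne : s(u, x) ≠ s(x, y) := by
      have hnodup := hp.isTrail.edges_nodup
      simp only [Walk.edges_cons, List.nodup_cons, List.mem_cons, not_or] at hnodup
      exact hnodup.1.1
    have hsplit : s(u, x) ≠ e ∧ s(u, x) ≠ f ∨ s(x, y) ≠ e ∧ s(x, y) ≠ f := by
      have := hef x
      grind
    rcases hsplit with ⟨hge, hgf⟩ | ⟨hge, hgf⟩
    · exact of_ne (by simp) hge hgf
    · exact of_ne (by simp) hge hgf

theorem conflictFreeConnects_update_id_of_disjoint [DecidableEq V] (hG : G.Preconnected)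
    {e f : Sym2 V} (hef : ∀ x ∈ e, x ∉ f) :
    ConflictFreeConnects (Function.update id f e) G := by
  intro u v huv
  obtain ⟨p, hp⟩ := (hG u v).exists_isPath
  exact ⟨p, hp, isConflictFree_update_id_of_disjoint hef hp huv⟩

theorem ConflictFreeConnects.injOn_neighborSet (hc : ConflictFreeConnects c G)
    (hG : G.IsAcyclic) (v : V) : Set.InjOn (fun w => c s(v, w)) (G.neighborSet v) := by
  intro a (ha : G.Adj v a) b (hb : G.Adj v b) (hab : c s(v, a) = c s(v, b))
  by_contra hne
  obtain ⟨p, hp, e, he, huniq⟩ := hc a b hne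
  let q : G.Walk a b := .cons ha.symm (.cons hb .nil)
  have hq : q.IsPath := by simp [q, ha.ne', hb.ne, hne]
  obtain rfl : p = q :=
    congrArg Subtype.val ((hG.subsingleton_path a b).elim ⟨p, hp⟩ ⟨q, hq⟩)
  have hedges : q.edges = [s(v, a), s(v, b)] := by simp [q, Sym2.eq_swap]
  simp only [hedges, List.mem_cons, List.not_mem_nil, or_false, forall_eq_or_imp, forall_eq]
    at he huniq
  have hsame : s(v, a) = s(v, b) := by
    rcases he with rfl | rfl
    · exact (huniq.2 hab.symm).symm
    · exact huniq.1 hab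
  exact hne (Sym2.congr_right.1 hsame)

theorem cfcNum_le_card {s : Finset α} (hs : s.Nonempty) (hmaps : Set.MapsTo c G.edgeSet s)
    (hc : ConflictFreeConnects c G) : cfcNum G ≤ s.card := by
  have : NeZero s.card := ⟨hs.card_ne_zero⟩
  obtain ⟨φ, -, hφ⟩ : ∃ φ : α → Fin s.card, _ ∧ Set.InjOn φ s :=
    s.finite_toSet.exists_injOn_of_encard_le (t := Set.univ) (by simp)
  exact Nat.sInf_le ⟨φ ∘ c, isCFCColoring_iff.2 (hc.comp_injOn (hφ.mono hmaps.image_subset))⟩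

theorem exists_conflictFreeConnects_cfcNum [Finite V] (hG : G.Preconnected) :
    ∃ c : Sym2 V → Fin (cfcNum G), ConflictFreeConnects c G := by
  have hne : {k | ∃ c : Sym2 V → Fin k, IsCFCColoring G k c}.Nonempty :=
    ⟨_, _, isCFCColoring_iff.2 <|
      (conflictFreeConnects_id hG).comp_injOn (Finite.equivFin (Sym2 V)).injective.injOn⟩
  obtain ⟨c, hc⟩ := Nat.sInf_mem hne
  exact ⟨c, isCFCColoring_iff.1 hc⟩

theorem cfcNum_pos [Finite V] (hG : G.Connected) : 0 < cfcNum G := by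
  obtain ⟨v⟩ := hG.nonempty
  obtain ⟨c, -⟩ := exists_conflictFreeConnects_cfcNum hG.preconnected
  exact (c s(v, v)).pos

theorem cfcNum_anti [Finite V] (hH : H.Preconnected) (hHG : H ≤ G) : cfcNum G ≤ cfcNum H := by
  obtain ⟨c, hc⟩ := exists_conflictFreeConnects_cfcNum hH
  exact Nat.sInf_le ⟨c, isCFCColoring_iff.2 (hc.mono hHG)⟩

theorem cfcNum_top_le_one : cfcNum (⊤ : SimpleGraph V) ≤ 1 :=
  cfcNum_le_card (c := fun _ => ()) (Finset.singleton_nonempty ()) (fun _ _ => by simp)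
    conflictFreeConnects_top

theorem cfcNum_eq_one_iff [Finite V] (hG : G.Connected) : cfcNum G = 1 ↔ G = ⊤ := by
  constructor
  · intro h
    obtain ⟨c, hc⟩ := exists_conflictFreeConnects_cfcNum hG.preconnected
    have : Subsingleton (Fin (cfcNum G)) := Fin.subsingleton_iff_le_one.2 h.le
    exact hc.eq_top
  · rintro rfl
    exact le_antisymm cfcNum_top_le_one (cfcNum_pos hG)

theorem cfcNum_le_card_edgeFinset [Nontrivial V] [Fintype G.edgeSet] (hG : G.Preconnected) :
    cfcNum G ≤ G.edgeFinset.card := by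
  obtain ⟨x⟩ := ‹Nontrivial V›.to_nonempty
  obtain ⟨y, hxy⟩ := hG.exists_adj_of_nontrivial x
  exact cfcNum_le_card ⟨s(x, y), by simpa using hxy⟩ (by simp [Set.MapsTo])
    (conflictFreeConnects_id hG)

theorem cfcNum_lt_card_edgeFinset [Fintype G.edgeSet] (hG : G.Preconnected) {e f : Sym2 V}
    (he : e ∈ G.edgeSet) (hf : f ∈ G.edgeSet) (hef : ∀ x ∈ e, x ∉ f) :
    cfcNum G < G.edgeFinset.card := by
  classical
  have hne : e ≠ f := by
    rintro rfl
    exact hef _ e.out_fst_mem e.out_fst_mem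
  have hmaps : Set.MapsTo (Function.update id f e) G.edgeSet (G.edgeFinset.erase f) := by
    intro g hg
    by_cases hgf : g = f <;> simp_all
  calc
    cfcNum G ≤ (G.edgeFinset.erase f).card :=
      cfcNum_le_card ⟨e, by simp [hne, he]⟩ hmaps
        (conflictFreeConnects_update_id_of_disjoint hG hef)
    _ < G.edgeFinset.card := Finset.card_erase_lt_of_mem (by simpa using hf)

theorem cfcNum_lt_card [Fintype V] [Nontrivial V] (hG : G.Connected) :
    cfcNum G < Fintype.card V := by
  classical
  obtain ⟨T, hTG, hT⟩ := hG.exists_isTree_le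
  calc
    cfcNum G ≤ cfcNum T := cfcNum_anti hT.preconnected hTG
    _ ≤ T.edgeFinset.card := cfcNum_le_card_edgeFinset hT.preconnected
    _ < Fintype.card V := by rw [← hT.card_edgeFinset]; exact Nat.lt_succ_self _

theorem isAcyclic_fromEdgeSet_pair (e f : Sym2 V) : (fromEdgeSet {e, f}).IsAcyclic := by
  classical
  intro v p hp
  have hsub : p.edges ⊆ [e, f] := fun g hg => by
    have := p.edges_subset_edgeSet hg
    simp_all
  have hle : p.length ≤ 2 := by
    simpa using (hp.isTrail.edges_nodup.subperm hsub).length_le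
  exact absurd hp.three_le_length (by lia)

theorem cfcNum_add_one_lt_card [Fintype V] (hG : G.Connected) {e f : Sym2 V}
    (he : e ∈ G.edgeSet) (hf : f ∈ G.edgeSet) (hef : ∀ x ∈ e, x ∉ f) :
    cfcNum G + 1 < Fintype.card V := by
  classical
  have hle : fromEdgeSet {e, f} ≤ G := by
    rw [fromEdgeSet_le]
    exact Set.sdiff_subset.trans (Set.pair_subset he hf)
  obtain ⟨T, hT_ge, hTG, hT⟩ :=
    hG.exists_isTree_le_of_le_of_isAcyclic hle (isAcyclic_fromEdgeSet_pair e f)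
  have mem_T {g} (hg : g ∈ ({e, f} : Set (Sym2 V))) (hgG : g ∈ G.edgeSet) : g ∈ T.edgeSet :=
    edgeSet_mono hT_ge (by simpa using ⟨hg, G.not_isDiag_of_mem_edgeSet hgG⟩)
  rw [← hT.card_edgeFinset]
  gcongr
  calc
    cfcNum G ≤ cfcNum T := cfcNum_anti hT.preconnected hTG
    _ < T.edgeFinset.card :=
      cfcNum_lt_card_edgeFinset hT.preconnected (mem_T (by simp) he) (mem_T (by simp) hf) hef

theorem eq_top_or_exists_eq_starGraph (hG : ∀ x, ∃ y, G.Adj x y)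
    (hmeet : ∀ e ∈ G.edgeSet, ∀ f ∈ G.edgeSet, ∃ x ∈ e, x ∈ f) :
    G = ⊤ ∨ ∃ v, G = starGraph v := by
  refine or_iff_not_imp_left.2 fun hne => ?_
  obtain ⟨x, y, hxy, hnadj⟩ := ne_top_iff_exists_not_adj.1 hne
  obtain ⟨v, hxv⟩ := hG x
  have hyv : G.Adj y v := by
    obtain ⟨w, hyw⟩ := hG y
    have := hmeet s(x, v) hxv s(y, w) hyw
    grind [G.adj_comm x y]
  have mem_edge {a b} (hab : G.Adj a b) : a = v ∨ b = v := by
    have := hmeet s(a, b) hab s(x, v) hxv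
    have := hmeet s(a, b) hab s(y, v) hyv
    grind [G.adj_comm x y]
  have adj_center {a} (hav : a ≠ v) : G.Adj a v := by
    obtain ⟨b, hab⟩ := hG a
    exact (mem_edge hab).resolve_left hav ▸ hab
  refine ⟨v, ?_⟩
  ext a b
  rw [starGraph_adj]
  refine ⟨fun hab => ⟨hab.ne, mem_edge hab⟩, ?_⟩
  rintro ⟨hab, rfl | rfl⟩
  · exact (adj_center hab.symm).symm
  · exact adj_center hab

theorem degree_le_cfcNum [Finite V] (hG : G.IsTree) (v : V) [Fintype (G.neighborSet v)] :
    G.degree v ≤ cfcNum G := by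
  obtain ⟨c, hc⟩ := exists_conflictFreeConnects_cfcNum hG.preconnected
  simpa using Finset.card_le_card_of_injOn (s := G.neighborFinset v) (t := Finset.univ)
    (fun w => c s(v, w)) (by simp [Set.MapsTo])
    (by simpa using hc.injOn_neighborSet hG.isAcyclic v)

theorem exists_eq_starGraph_of_cfcNum_add_one_eq_card [Fintype V] [Nontrivial V]
    (hG : G.Connected) (h : cfcNum G + 1 = Fintype.card V) : ∃ v, G = starGraph v := by
  have hmeet : ∀ e ∈ G.edgeSet, ∀ f ∈ G.edgeSet, ∃ x ∈ e, x ∈ f := by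
    by_contra! ⟨e, he, f, hf, hef⟩
    exact (cfcNum_add_one_lt_card hG he hf hef).ne h
  obtain rfl | hstar :=
    eq_top_or_exists_eq_starGraph hG.preconnected.exists_adj_of_nontrivial hmeet
  · have hcard : Fintype.card V = 2 := by rw [← h, (cfcNum_eq_one_iff hG).2 rfl]
    obtain ⟨x, y, -, huniv⟩ := Nat.card_eq_two_iff.1 (Nat.card_eq_fintype_card.trans hcard)
    have eq_or_eq (a : V) : a = x ∨ a = y := by simpa using huniv.ge (Set.mem_univ a)
    refine ⟨x, ?_⟩
    ext a b
    have := eq_or_eq a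
    have := eq_or_eq b
    grind [top_adj, starGraph_adj]
  · exact hstar

theorem cfcNum_add_one_eq_card_iff [Fintype V] [Nontrivial V] (hG : G.Connected) :
    cfcNum G + 1 = Fintype.card V ↔ ∃ v, G = starGraph v := by
  classical
  refine ⟨exists_eq_starGraph_of_cfcNum_add_one_eq_card hG, ?_⟩
  rintro ⟨v, rfl⟩
  have hdeg := degree_le_cfcNum (isTree_starGraph v) v
  rw [degree_starGraph_center] at hdeg
  have := cfcNum_lt_card hG
  lia

end

/-- For a nontrivial connected graph `G` of order `n`: `1 ≤ cfc(G) ≤ n − 1`, with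
`cfc(G) = 1` iff `G` is complete, and `cfc(G) = n − 1` iff `G` is the star `K_{1,n−1}`. -/
theorem cfc_bounds_and_extremes {V : Type*} [Fintype V] (G : SimpleGraph V)
    (hG : G.Connected) (n : ℕ) (hn : Fintype.card V = n) (h2 : 2 ≤ n) :
    1 ≤ cfcNum G ∧ cfcNum G ≤ n - 1 ∧
    (cfcNum G = 1 ↔ G = ⊤) ∧
    (cfcNum G = n - 1 ↔ ∃ v : V, ∀ a b : V, G.Adj a b ↔ a ≠ b ∧ (a = v ∨ b = v)) := by
  subst hn
  have : Nontrivial V := Fintype.one_lt_card_iff_nontrivial.1 h2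
  have hlt := cfcNum_lt_card hG
  have hstar : cfcNum G = Fintype.card V - 1 ↔ ∃ v, G = starGraph v := by
    rw [← cfcNum_add_one_eq_card_iff hG]
    lia
  refine ⟨cfcNum_pos hG, Nat.le_sub_one_of_lt hlt, cfcNum_eq_one_iff hG, hstar.trans ?_⟩
  simp only [SimpleGraph.ext_iff, funext_iff, eq_iff_iff, starGraph_adj]
end

section
/- For every tree T of order n ≥ 3, the vertex ranking number satisfies r(T) ≤ log_{3/2} n, i.e., r(T) ≤ (log n)/(log(3/2)). -/
open SimpleGraph

/-- A `k`-ranking of `G`: a labeling of the vertices by `Fin k` (ordered labels) such that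
on every path joining two distinct vertices with the same label there is a vertex with a
strictly larger label. -/
def IsRanking {V : Type*} (G : SimpleGraph V) (k : ℕ) (c : V → Fin k) : Prop :=
  ∀ u v : V, u ≠ v → c u = c v →
    ∀ p : G.Walk u v, p.IsPath → ∃ w ∈ p.support, c u < c w

/-- The vertex ranking number: the least `k` for which `G` has a `k`-ranking. -/
noncomputable def rankingNumber {V : Type*} (G : SimpleGraph V) : ℕ :=
  sInf {k | ∃ c : V → Fin k, IsRanking G k c}

/-!
A finite tree has a centroid `x`: every component of the tree minus `x` contains at most half of
the vertices. Giving `x` a new top label and ranking the components recursively, on the same set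
of smaller labels, uses at most `⌊log₂ n⌋ + 1` labels. It remains to compare this number with
`log n / log (3 / 2)`: since `(3 / 2) ^ (k + 1) ≤ 2 ^ k` for `k ≥ 2`, only `n = 3` has to be
treated separately.
-/

/-- A graph is `k`-rankable if it admits a `k`-ranking; this is to `rankingNumber` what
`SimpleGraph.Colorable` is to `SimpleGraph.chromaticNumber`. -/
def Rankable {V : Type*} (G : SimpleGraph V) (k : ℕ) : Prop :=
  ∃ c : V → Fin k, IsRanking G k c

section Ranking

variable {V : Type*} {G : SimpleGraph V} {k : ℕ}

theorem Rankable.rankingNumber_le (h : Rankable G k) : rankingNumber G ≤ k :=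
  Nat.sInf_le h

theorem IsRanking.exists_lt_of_support_subset {s : Set V} {c : s → Fin k}
    (hc : IsRanking (G.induce s) k c) {u v : s} (hne : u ≠ v) (huv : c u = c v)
    {p : G.Walk u v} (hp : p.IsPath) (hps : ∀ w ∈ p.support, w ∈ s) :
    ∃ w : s, ↑w ∈ p.support ∧ c u < c w := by
  have hq : (p.induce s hps).IsPath := .of_map (f := (Embedding.induce s).toHom) <| by
    rwa [Walk.map_induce]
  obtain ⟨w, hw, hlt⟩ := hc u v hne huv _ hq
  rw [Walk.support_induce, List.mem_attachWith] at hw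
  exact ⟨w, hw, hlt⟩

theorem Rankable.of_induce_compl_singleton {x : V} (h : Rankable (G.induce {x}ᶜ) k) :
    Rankable G (k + 1) := by
  classical
  obtain ⟨c, hc⟩ := h
  let c' : V → Fin (k + 1) := fun v => if hv : v = x then Fin.last k else (c ⟨v, hv⟩).castSucc
  have c'_self : c' x = Fin.last k := dif_pos rfl
  have c'_coe (v : ({x}ᶜ : Set V)) : c' v = (c v).castSucc := dif_neg v.2
  have c'_lt_last {v : V} (hv : v ≠ x) : c' v < Fin.last k :=
    (c'_coe ⟨v, hv⟩).trans_lt (Fin.castSucc_lt_last _)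
  refine ⟨c', fun u v hne huv p hp => ?_⟩
  have hu : u ≠ x := by
    rintro rfl
    exact (c'_lt_last hne.symm).ne (huv.symm.trans c'_self)
  have hv : v ≠ x := by
    rintro rfl
    exact (c'_lt_last hne).ne (huv.trans c'_self)
  by_cases hx : x ∈ p.support
  · exact ⟨x, hx, c'_self ▸ c'_lt_last hu⟩
  · lift u to ({x}ᶜ : Set V) using hu
    lift v to ({x}ᶜ : Set V) using hv
    rw [c'_coe, c'_coe] at huv
    obtain ⟨w, hw, hlt⟩ := hc.exists_lt_of_support_subset (Subtype.coe_ne_coe.1 hne)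
      (Fin.castSucc_injective k huv) hp fun w hw => ne_of_mem_of_not_mem hw hx
    exact ⟨w, hw, by rwa [c'_coe, c'_coe, Fin.castSucc_lt_castSucc_iff]⟩

theorem Rankable.of_connectedComponent
    (h : ∀ C : G.ConnectedComponent, Rankable C.toSimpleGraph k) : Rankable G k := by
  classical
  choose c hc using h
  let c' : V → Fin k := fun v => c (G.connectedComponentMk v) ⟨v, rfl⟩
  have c'_coe : ∀ {C : G.ConnectedComponent} (v : C), c' v = c C v := by
    rintro _ ⟨v, rfl⟩
    rfl
  refine ⟨c', fun u v hne huv p hp => ?_⟩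
  obtain ⟨C, hu⟩ : ∃ C : G.ConnectedComponent, u ∈ C := ⟨_, rfl⟩
  have hpC : ∀ w ∈ p.support, w ∈ C := fun w hw =>
    (ConnectedComponent.sound (p.takeUntil w hw).reachable.symm).trans hu
  lift u to C using hu
  lift v to C using hpC v p.end_mem_support
  rw [c'_coe, c'_coe] at huv
  obtain ⟨w, hw, hlt⟩ :=
    (hc C).exists_lt_of_support_subset (Subtype.coe_ne_coe.1 hne) huv hp hpC
  exact ⟨w, hw, by rwa [c'_coe, c'_coe]⟩

end Ranking

section Centroid

variable {V : Type*} {G : SimpleGraph V}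

variable (G) in
theorem exists_forall_adj_two_mul_ncard_dist_lt_le [Finite V] [Nonempty V] :
    ∃ x, ∀ y, G.Adj x y → 2 * {w | G.dist y w < G.dist x w}.ncard ≤ Nat.card V := by
  classical
  have := Fintype.ofFinite V
  -- Stepping from a vertex of minimal total distance to a neighbour `y` gains `1` on the
  -- vertices closer to `y` and loses at most `1` on all others.
  obtain ⟨x, hx⟩ := Finite.exists_min fun x => ∑ w, G.dist x w
  refine ⟨x, fun y hxy => ?_⟩
  have dist_add_le (w : V) :
      G.dist y w + (if G.dist y w < G.dist x w then 2 else 0) ≤ G.dist x w + 1 := by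
    have := hxy.diff_dist_adj (u := w)
    simp only [dist_comm (u := w)] at this
    split_ifs <;> omega
  have hsum := Finset.sum_le_sum fun w (_ : w ∈ Finset.univ) => dist_add_le w
  simp only [Finset.sum_add_distrib, ← Finset.sum_filter, Finset.sum_const, smul_eq_mul,
    Finset.card_univ] at hsum
  rw [Set.ncard_eq_toFinset_card', Set.toFinset_ofPred, Nat.card_eq_fintype_card]
  have := hx y
  omega

theorem exists_adj_reachable_induce_compl_singleton {x v : V} (hv : v ≠ x)
    (h : G.Reachable x v) :
    ∃ y : ({x}ᶜ : Set V), G.Adj x y ∧ (G.induce {x}ᶜ).Reachable y ⟨v, hv⟩ := by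
  obtain ⟨p, hp⟩ := h.exists_isPath
  cases p with
  | nil => exact absurd rfl hv
  | @cons _ y _ hxy q =>
    have hq : ∀ w ∈ q.support, w ∈ ({x}ᶜ : Set V) := fun w hw =>
      ne_of_mem_of_not_mem hw ((Walk.cons_isPath_iff hxy q).1 hp).2
    exact ⟨⟨y, hxy.ne'⟩, hxy, ⟨q.induce _ hq⟩⟩

theorem dist_lt_dist_of_reachable_induce_compl_singleton (hG : G.IsAcyclic) {x : V}
    {y w : ({x}ᶜ : Set V)} (hxy : G.Adj x y) (hyw : (G.induce {x}ᶜ).Reachable y w) :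
    G.dist y w < G.dist x w := by
  obtain ⟨q, hq⟩ := hyw.exists_isPath
  let f := (Embedding.induce (G := G) ({x}ᶜ : Set V)).toHom
  have hx : x ∉ (q.map f).support := by
    rw [Walk.support_map, List.mem_map]
    rintro ⟨z, -, hz⟩
    exact z.2 hz
  let r : G.Walk x w := .cons hxy (q.map f)
  have hr : r.IsPath := (hq.map Subtype.val_injective).cons hx
  obtain ⟨p, hp, hlen⟩ := r.reachable.exists_path_of_dist
  have hpr : p = r := congrArg Subtype.val ((hG.subsingleton_path x w).elim ⟨p, hp⟩ ⟨r, hr⟩)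
  calc G.dist y w ≤ (q.map f).length := dist_le _
    _ < r.length := Nat.lt_succ_self _
    _ = G.dist x w := hpr ▸ hlen

theorem exists_forall_connectedComponent_two_mul_ncard_le [Finite V] (hG : G.IsTree) :
    ∃ x, ∀ D : (G.induce {x}ᶜ).ConnectedComponent, 2 * D.supp.ncard ≤ Nat.card V := by
  have := hG.connected.nonempty
  obtain ⟨x, hx⟩ := exists_forall_adj_two_mul_ncard_dist_lt_le G
  refine ⟨x, fun D => ?_⟩
  obtain ⟨v, hv⟩ := D.nonempty_supp
  obtain ⟨y, hxy, hyv⟩ :=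
    exists_adj_reachable_induce_compl_singleton v.2 (hG.connected.preconnected x v)
  have hsub : Subtype.val '' D.supp ⊆ {w | G.dist y w < G.dist x w} := by
    rintro _ ⟨w, hw, rfl⟩
    exact dist_lt_dist_of_reachable_induce_compl_singleton hG.isAcyclic hxy
      (hyv.trans (D.reachable_of_mem_supp hv hw))
  calc 2 * D.supp.ncard = 2 * (Subtype.val '' D.supp).ncard := by
        rw [Set.ncard_image_of_injective _ Subtype.val_injective]
    _ ≤ 2 * {w | G.dist y w < G.dist x w}.ncard := by gcongr; exact Set.toFinite _
    _ ≤ Nat.card V := hx y hxy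

end Centroid

theorem rankable_of_isAcyclic {V : Type*} {G : SimpleGraph V} (hG : G.IsAcyclic) {k : ℕ}
    (hcard : ∀ C : G.ConnectedComponent, C.supp.encard < 2 ^ k) : Rankable G k := by
  induction k generalizing V with
  | zero =>
    have : IsEmpty V := ⟨fun v => (G.connectedComponentMk v).nonempty_supp.ne_empty <| by
      simpa using hcard (G.connectedComponentMk v)⟩
    exact ⟨isEmptyElim, isEmptyElim⟩
  | succ k ih =>
    refine .of_connectedComponent fun C => ?_
    have hT : C.toSimpleGraph.IsTree := hG.isTree_connectedComponent C
    have hfin : C.supp.Finite := Set.encard_lt_top_iff.1 ((hcard C).trans_le le_top)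
    have : Finite C := hfin
    have hC : Nat.card C < 2 ^ (k + 1) := by
      have h := hcard C
      rw [← hfin.cast_ncard_eq, ← Nat.card_coe_set_eq] at h
      exact_mod_cast h
    obtain ⟨x, hx⟩ := exists_forall_connectedComponent_two_mul_ncard_le hT
    refine .of_induce_compl_singleton (ih (hT.isAcyclic.induce {x}ᶜ) fun D => ?_)
    have hD : D.supp.ncard < 2 ^ k :=
      Nat.lt_of_mul_lt_mul_left (((hx D).trans_lt hC).trans_eq (pow_succ' 2 k))
    rw [← D.supp.toFinite.cast_ncard_eq]
    exact_mod_cast hD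

theorem three_halves_pow_succ_le_two_pow {k : ℕ} (hk : 2 ≤ k) :
    (3 / 2 : ℝ) ^ (k + 1) ≤ 2 ^ k := by
  induction k, hk using Nat.le_induction with
  | base => norm_num
  | succ k _ ih =>
    calc (3 / 2 : ℝ) ^ (k + 1 + 1) = (3 / 2) ^ (k + 1) * (3 / 2) := pow_succ _ _
      _ ≤ 2 ^ k * 2 := by gcongr; norm_num
      _ = 2 ^ (k + 1) := (pow_succ _ _).symm

theorem three_halves_pow_succ_log_two_le {n : ℕ} (hn : 3 ≤ n) :
    (3 / 2 : ℝ) ^ (Nat.log 2 n + 1) ≤ n := by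
  obtain rfl | hn4 : n = 3 ∨ 4 ≤ n := by omega
  · norm_num
  · calc (3 / 2 : ℝ) ^ (Nat.log 2 n + 1) ≤ 2 ^ Nat.log 2 n :=
        three_halves_pow_succ_le_two_pow (Nat.le_log_of_pow_le one_lt_two hn4)
      _ ≤ n := mod_cast Nat.pow_log_le_self 2 (by omega)

theorem rankingNumber_tree_le_log_general {V : Type*} {G : SimpleGraph V} (hG : G.IsAcyclic)
    {n : ℕ} (hcard : ∀ C : G.ConnectedComponent, C.supp.encard ≤ n) (hn : 3 ≤ n) :
    (rankingNumber G : ℝ) ≤ Real.log n / Real.log (3 / 2) := by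
  have hlt : (n : ℕ∞) < 2 ^ (Nat.log 2 n + 1) := mod_cast Nat.lt_pow_succ_log_self one_lt_two n
  have hle : rankingNumber G ≤ Nat.log 2 n + 1 :=
    (rankable_of_isAcyclic hG fun C => (hcard C).trans_lt hlt).rankingNumber_le
  rw [le_div_iff₀ (Real.log_pos (by norm_num))]
  calc (rankingNumber G : ℝ) * Real.log (3 / 2)
      ≤ ((Nat.log 2 n + 1 : ℕ) : ℝ) * Real.log (3 / 2) := by gcongr
    _ = Real.log ((3 / 2) ^ (Nat.log 2 n + 1)) := (Real.log_pow _ _).symm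
    _ ≤ Real.log n := Real.log_le_log (by positivity) (three_halves_pow_succ_log_two_le hn)

/-- For every tree `T` of order `n ≥ 3`, the ranking number satisfies
`r(T) ≤ log n / log (3/2)`. -/
theorem rankingNumber_tree_le_log {V : Type*} [Fintype V] (T : SimpleGraph V)
    (hT : T.IsTree) (n : ℕ) (hn : Fintype.card V = n) (h3 : 3 ≤ n) :
    (rankingNumber T : ℝ) ≤ Real.log n / Real.log (3 / 2) :=
  rankingNumber_tree_le_log_general hT.isAcyclic
    (fun C => hn ▸ C.supp.encard_le_card.trans_eq (by simp)) h3
end
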